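/- Let X be a Borel subset of the Cantor space 2^ω such that the subspace X is homogeneous and not locally compact. Then the Wadge class generated by X is non-self-dual; in particular, there is no continuous function f : 2^ω → 2^ω with f⁻¹[X] = 2^ω \ X. -/

import Mathlib

open Set

abbrev Cantor := ℕ → Bool

def UpwardClosed (S : Set Cantor) : Prop :=
  ∀ x ∈ S, ∀ y : Cantor, (∀ n, x n = true → y n = true) → y ∈ S

def DownwardClosed (R : Set Cantor) : Prop :=
  ∀ y ∈ R, ∀ x : Cantor, (∀ n, x n = true → y n = true) → x ∈ R

def ClosedUnderFinMod (S : Set Cantor) : Prop :=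
  ∀ x ∈ S, ∀ y : Cantor, {n | x n ≠ y n}.Finite → y ∈ S

def IsSemifilter (S : Set Cantor) : Prop :=
  (fun _ => false) ∉ S ∧ (fun _ => true) ∈ S ∧ UpwardClosed S ∧ ClosedUnderFinMod S

def IsSemiideal (R : Set Cantor) : Prop :=
  (fun _ => false) ∈ R ∧ (fun _ => true) ∉ R ∧ DownwardClosed R ∧ ClosedUnderFinMod R

def ClosedUnderInter (S : Set Cantor) : Prop :=
  ∀ x ∈ S, ∀ y ∈ S, (fun n => x n && y n) ∈ S

def IsFilterOnOmega (F : Set Cantor) : Prop := IsSemifilter F ∧ ClosedUnderInter F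

def IsHomogeneous (X : Type*) [TopologicalSpace X] : Prop :=
  ∀ x y : X, ∃ h : X ≃ₜ X, h x = y

def IsFsigma (A : Set Cantor) : Prop :=
  ∃ F : ℕ → Set Cantor, (∀ n, IsClosed (F n)) ∧ A = ⋃ n, F n

def DOmegaSigmaTwo (X : Set Cantor) : Prop :=
  ∃ A : ℕ → Set Cantor, (∀ n, IsFsigma (A n)) ∧ Monotone A ∧
    X = ⋃ n ∈ {n : ℕ | Odd n}, (A n \ ⋃ m < n, A m)

def InDelta (X : Set Cantor) : Prop := DOmegaSigmaTwo X ∧ DOmegaSigmaTwo Xᶜ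

def WadgeLe (A B : Set Cantor) : Prop :=
  ∃ f : Cantor → Cantor, Continuous f ∧ A = f ⁻¹' B

def WadgeEquiv (A B : Set Cantor) : Prop := WadgeLe A B ∧ WadgeLe B A

def CompletelyMetrizable (X : Type*) [t : TopologicalSpace X] : Prop :=
  ∃ m : MetricSpace X, m.toUniformSpace.toTopologicalSpace = t ∧
    @CompleteSpace X m.toUniformSpace

def FirstCategory (X : Type*) [TopologicalSpace X] : Prop :=
  ∃ f : ℕ → Set X, (∀ n, interior (closure (f n)) = ∅) ∧ (Set.univ : Set X) = ⋃ n, f n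

def CantorFin : Set Cantor := {x | {n | x n = true}.Finite}

def BorelSet (X : Set Cantor) : Prop := @MeasurableSet Cantor (borel Cantor) X

/-!
Suppose that a continuous `f` exchanges `X` and its complement. By Lavrentiev's theorem,
homeomorphisms of `X` extend to `Gδ` sets, so homogeneity of `X` yields reductions of `X` to itself
that are defined on a `Gδ` set containing `X` and take values in any prescribed clopen set meeting
`X`. Used directly or after `f`, such a reduction maps into a small clopen set while preserving or
reversing membership in `X`, as in the Martin–Monk argument: an infinite composition of these maps,
chosen according to `z` in the Cantor space, gives a continuous `φ` such that changing a single
coordinate of `z` changes whether `φ z` belongs to `X`. By the zero-one law for Baire category, the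
preimage of `X` under `φ` does not have the Baire property.

As the maps are only partially defined, the composites need points of `X` at which all earlier maps
can be applied. The failure of this would place `X` in a finite level of the difference hierarchy
over `Fσ`. There, applying `f` and the Baire category theorem on the closure of `X` lowers the
level on a clopen set meeting `X`, and homogeneity carries this level back to the whole space, until
`X` is relatively open in its closure, hence locally compact.
-/

section

open Filter Function Topology TopologicalSpace

section FlipSets

/-- The homeomorphism of the Cantor space that changes the `n`-th coordinate. -/
def flipAt (n : ℕ) : Cantor ≃ₜ Cantor where
  toFun z := update z n (!z n)
  invFun z := update z n (!z n)
  left_inv z := by simp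
  right_inv z := by simp
  continuous_toFun := by fun_prop
  continuous_invFun := by fun_prop

lemma flipAt_apply_self (n : ℕ) (z : Cantor) : flipAt n z n = !z n :=
  update_self n _ z

lemma flipAt_apply_of_ne {n i : ℕ} (hi : i ≠ n) (z : Cantor) : flipAt n z i = z i :=
  update_of_ne hi _ z

lemma eventually_residual_comp_homeomorph {β : Type*} [TopologicalSpace β] {p : β → Prop}
    (h : ∀ᶠ z in residual β, p z) (e : β ≃ₜ β) : ∀ᶠ z in residual β, p (e z) :=
  (tendsto_residual_of_isOpenMap e.continuous e.isOpenMap).eventually h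

lemma exists_flipAt_stable_isOpen_subset {O : Set Cantor} (hO : IsOpen O) (hne : O.Nonempty) :
    ∃ n, ∃ V ⊆ O, IsOpen V ∧ V.Nonempty ∧ ∀ z ∈ V, flipAt n z ∈ V := by
  obtain ⟨x, hx⟩ := hne
  obtain ⟨_, ⟨y, n, rfl⟩, hxy, hyO⟩ :=
    (PiNat.isTopologicalBasis_cylinders fun _ : ℕ ↦ Bool).exists_subset_of_mem_open hx hO
  refine ⟨n, PiNat.cylinder y n, hyO, PiNat.isOpen_cylinder _ y n, ⟨x, hxy⟩, fun z hz i hi ↦ ?_⟩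
  rw [flipAt_apply_of_ne hi.ne, hz i hi]

theorem not_baireMeasurableSet_of_flipAt {A : Set Cantor} (h : ∀ z n, flipAt n z ∈ A ↔ z ∉ A) :
    ¬ BaireMeasurableSet A := by
  intro hA
  obtain ⟨O, hO, hAO⟩ := hA.residualEq_isOpen
  replace hAO : ∀ᶠ z in residual Cantor, z ∈ A ↔ z ∈ O := hAO.mem_iff
  have hflip (n : ℕ) : ∀ᶠ z in residual Cantor, flipAt n z ∈ O ↔ z ∉ O := by
    filter_upwards [hAO, eventually_residual_comp_homeomorph hAO (flipAt n)] with z hz hz'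
    rw [← hz, ← hz', h]
  rcases O.eq_empty_or_nonempty with rfl | hne
  · obtain ⟨z, hz⟩ := (dense_of_mem_residual (hflip 0)).nonempty
    exact hz.2 id
  · obtain ⟨n, V, hVO, hV, hVne, hVflip⟩ := exists_flipAt_stable_isOpen_subset hO hne
    obtain ⟨z, hz, hzV⟩ := (dense_of_mem_residual (hflip n)).exists_mem_open hV hVne
    exact hz.1 (hVO (hVflip z hzV)) (hVO hzV)

end FlipSets

section BorelFacts

variable {α β : Type*} [TopologicalSpace α] [TopologicalSpace β]

lemma isGδ_inter_preimage {G : Set α} {g : α → β} {H : Set β} (hG : IsGδ G)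
    (hg : ContinuousOn g G) (hH : IsGδ H) : IsGδ (G ∩ g ⁻¹' H) := by
  obtain ⟨O, hO, rfl⟩ := isGδ_iff_eq_iInter_nat.1 hH
  choose u hu hgu using fun n ↦ continuousOn_iff'.1 hg (O n) (hO n)
  have : G ∩ g ⁻¹' (⋂ n, O n) = G ∩ ⋂ n, u n := by
    simp only [preimage_iInter, inter_iInter]
    exact iInter_congr fun n ↦ by rw [inter_comm, hgu, inter_comm]
  rw [this]
  exact hG.inter (.iInter_of_isOpen hu)

lemma isGδ_iUnion_of_pairwise_disjoint {ι : Type*} [Countable ι] {D W : ι → Set α}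
    (hW : ∀ i, IsClopen (W i)) (hdisj : Pairwise (Disjoint on W)) (hD : ∀ i, IsGδ (D i))
    (hDW : ∀ i, D i ⊆ W i) : IsGδ (⋃ i, D i) := by
  have : ⋃ i, D i = (⋃ i, W i) ∩ ⋂ i, ((W i)ᶜ ∪ D i) := by
    refine subset_antisymm (iUnion_subset fun i x hx ↦ ?_) ?_
    · refine ⟨mem_iUnion_of_mem i (hDW i hx), mem_iInter.2 fun j ↦ ?_⟩
      rcases eq_or_ne i j with rfl | hij
      · exact .inr hx
      · exact .inl fun hj ↦ (hdisj hij).notMem_of_mem_left (hDW i hx) hj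
    · rintro x ⟨hx, hxD⟩
      obtain ⟨i, hi⟩ := mem_iUnion.1 hx
      exact mem_iUnion_of_mem i ((mem_iInter.1 hxD i).resolve_left (not_not_intro hi))
  rw [this]
  exact (isOpen_iUnion fun i ↦ (hW i).isOpen).isGδ.inter
    (.iInter fun i ↦ (hW i).compl.isOpen.isGδ.union (hD i))

lemma isSigmaCompact_inter_of_isClosed {A C : Set α} (hA : IsSigmaCompact A) (hC : IsClosed C) :
    IsSigmaCompact (A ∩ C) := by
  obtain ⟨K, hK, rfl⟩ := hA
  rw [iUnion_inter]
  exact isSigmaCompact_iUnion _ fun n ↦ ((hK n).inter_right hC).isSigmaCompact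

lemma isSigmaCompact_compl_of_isGδ [CompactSpace α] {G : Set α} (hG : IsGδ G) :
    IsSigmaCompact Gᶜ := by
  obtain ⟨O, hO, rfl⟩ := isGδ_iff_eq_iInter_nat.1 hG
  rw [compl_iInter]
  exact isSigmaCompact_iUnion _ fun n ↦ (hO n).isClosed_compl.isCompact.isSigmaCompact

lemma isGδ_compl_of_isSigmaCompact [T2Space α] {A : Set α} (hA : IsSigmaCompact A) : IsGδ Aᶜ := by
  obtain ⟨K, hK, rfl⟩ := hA
  rw [compl_iUnion]
  exact .iInter fun n ↦ (hK n).isClosed.isOpen_compl.isGδ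

lemma exists_isOpen_inter_subset_of_iUnion_isSigmaCompact [T2Space α] {ι : Type*} [Countable ι]
    {C : Set α} {A : ι → Set α} (hC : IsCompact C) (hne : C.Nonempty)
    (hA : ∀ i, IsSigmaCompact (A i)) (hCA : C ⊆ ⋃ i, A i) :
    ∃ i U, IsOpen U ∧ (U ∩ C).Nonempty ∧ U ∩ C ⊆ A i := by
  have : CompactSpace C := isCompact_iff_compactSpace.1 hC
  have : Nonempty C := hne.to_subtype
  choose K hK hKA using hA
  have hcov : ⋃ p : ι × ℕ, ((↑) ⁻¹' K p.1 p.2 : Set C) = univ := by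
    simp only [← hKA] at hCA
    rw [← preimage_iUnion, iUnion_prod', preimage_eq_univ_iff, Subtype.range_coe]
    exact hCA
  obtain ⟨⟨i, n⟩, x, hx⟩ := nonempty_interior_of_iUnion_of_closed
    (fun p : ι × ℕ ↦ (hK p.1 p.2).isClosed.preimage continuous_subtype_val) hcov
  obtain ⟨U, hU, hUK⟩ := isOpen_induced_iff.1 (isOpen_interior (s := ((↑) ⁻¹' K i n : Set C)))
  refine ⟨i, U, hU, ⟨x, hUK.symm.subset hx, x.2⟩, fun y hy ↦ ?_⟩
  have hyK : (⟨y, hy.2⟩ : C) ∈ ((↑) ⁻¹' K i n : Set C) := interior_subset (hUK.subset hy.1)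
  exact hKA i ▸ mem_iUnion_of_mem n hyK

end BorelFacts

section Lavrentiev

variable {α β : Type*} [TopologicalSpace α] [TopologicalSpace β] {X : Set α}

lemma exists_isOpen_forall_dist_lt {γ : Type*} [PseudoMetricSpace γ] {f : α → γ} {x : α}
    (hf : ContinuousWithinAt f X x) {ε : ℝ} (hε : 0 < ε) :
    ∃ V, IsOpen V ∧ x ∈ V ∧ ∀ y ∈ V ∩ X, ∀ z ∈ V ∩ X, dist (f y) (f z) < ε := by
  obtain ⟨V, hV, hxV, hVf⟩ := mem_nhdsWithin.1 (hf (Metric.ball_mem_nhds (f x) (half_pos hε)))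
  refine ⟨V, hV, hxV, fun y hy z hz ↦ ?_⟩
  linarith [dist_triangle_right (f y) (f z) (f x), Metric.mem_ball.1 (hVf hy),
    Metric.mem_ball.1 (hVf hz)]

theorem exists_isGδ_continuousOn_extension [PerfectlyNormalSpace α] [IsCompletelyMetrizableSpace β]
    {f : α → β} (hf : ContinuousOn f X) :
    ∃ G g, IsGδ G ∧ X ⊆ G ∧ G ⊆ closure X ∧ ContinuousOn g G ∧ EqOn g f X := by
  let _ := upgradeIsCompletelyMetrizable β
  let small (n : ℕ) : Set (Set α) :=
    {V | IsOpen V ∧ ∀ y ∈ V ∩ X, ∀ z ∈ V ∩ X, dist (f y) (f z) < 1 / (n + 1)}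
  let G := closure X ∩ ⋂ n, ⋃₀ small n
  have hXG : X ⊆ G := by
    refine fun x hx ↦ ⟨subset_closure hx, mem_iInter.2 fun n ↦ ?_⟩
    obtain ⟨V, hV, hxV, hVf⟩ :=
      exists_isOpen_forall_dist_lt (hf x hx) (Nat.one_div_pos_of_nat (n := n))
    exact ⟨V, ⟨hV, hVf⟩, hxV⟩
  have htendsto : ∀ x ∈ G, ∃ y, Tendsto f (𝓝[X] x) (𝓝 y) := by
    intro x hx
    have : (𝓝[X] x).NeBot := mem_closure_iff_nhdsWithin_neBot.1 hx.1
    refine cauchy_iff_exists_le_nhds.1 (Metric.cauchy_iff.2 ⟨inferInstance, fun ε hε ↦ ?_⟩)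
    obtain ⟨n, hn⟩ := exists_nat_one_div_lt hε
    obtain ⟨V, ⟨hV, hVf⟩, hxV⟩ := mem_iInter.1 hx.2 n
    refine ⟨f '' (V ∩ X), image_mem_map (mem_nhdsWithin.2 ⟨V, hV, hxV, Subset.rfl⟩), ?_⟩
    rintro _ ⟨y, hy, rfl⟩ _ ⟨z, hz, rfl⟩
    exact (hVf y hy z hz).trans hn
  exact ⟨G, extendFrom X f, isClosed_closure.isGδ.inter (.iInter_of_isOpen fun n ↦
    isOpen_sUnion fun V hV ↦ hV.1), hXG, inter_subset_left,
    continuousOn_extendFrom inter_subset_left htendsto, fun x hx ↦ extendFrom_extends hf x hx⟩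

lemma exists_isGδ_extension_of_subtype [PerfectlyNormalSpace α] [IsCompletelyMetrizableSpace β]
    [Nonempty β] {f : X → β} (hf : Continuous f) :
    ∃ G g, IsGδ G ∧ X ⊆ G ∧ G ⊆ closure X ∧ ContinuousOn g G ∧ ∀ x : X, g x = f x := by
  let F : α → β := extend Subtype.val f fun _ ↦ Classical.arbitrary β
  have hF (x : X) : F x = f x := Subtype.val_injective.extend_apply ..
  have hFX : ContinuousOn F X := by
    rw [continuousOn_iff_continuous_domRestrict]
    exact hf.congr fun x ↦ (hF x).symm
  obtain ⟨G, g, hG, hXG, hGX, hg, hgF⟩ := exists_isGδ_continuousOn_extension hFX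
  exact ⟨G, g, hG, hXG, hGX, hg, fun x ↦ (hgF x.2).trans (hF x)⟩

theorem exists_isGδ_homeomorph_extension [IsCompletelyMetrizableSpace α]
    [IsCompletelyMetrizableSpace β] {Y : Set β} (h : X ≃ₜ Y) (hne : X.Nonempty) :
    ∃ (G : Set α) (g : α → β) (k : β → α), IsGδ G ∧ X ⊆ G ∧ ContinuousOn g G ∧
      MapsTo g G (closure Y) ∧ (∀ x : X, g x = h x) ∧ (∀ y : Y, k y = h.symm y) ∧
      LeftInvOn k g G := by
  have : Nonempty α := hne.to_type
  have : Nonempty β := hne.to_subtype.map fun x ↦ (h x : β)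
  obtain ⟨G, g, hG, hXG, -, hg, hgh⟩ :=
    exists_isGδ_extension_of_subtype (continuous_subtype_val.comp h.continuous)
  obtain ⟨H, k, hH, hYH, hHY, hk, hkh⟩ :=
    exists_isGδ_extension_of_subtype (continuous_subtype_val.comp h.symm.continuous)
  simp only [comp_apply] at hgh hkh
  have hkg : ContinuousOn (fun x ↦ (k (g x), x)) (G ∩ g ⁻¹' H) :=
    (hk.comp (hg.mono inter_subset_left) inter_subset_right).prodMk continuousOn_id
  refine ⟨(G ∩ g ⁻¹' H) ∩ (fun x ↦ (k (g x), x)) ⁻¹' diagonal α, g, k,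
    isGδ_inter_preimage (isGδ_inter_preimage hG hg hH) hkg isClosed_diagonal.isGδ, ?_,
    hg.mono fun x hx ↦ hx.1.1, fun x hx ↦ hHY hx.1.2, hgh, hkh, fun x hx ↦ hx.2⟩
  intro x hx
  have hgx := hgh ⟨x, hx⟩
  refine ⟨⟨hXG hx, hYH ?_⟩, ?_⟩
  · exact hgx ▸ (h ⟨x, hx⟩).2
  · change k (g x) = x
    rw [hgx, hkh, h.symm_apply_apply]

end Lavrentiev

section PartialReductions

variable {α : Type*}

lemma exists_eqOn_of_pairwise_disjoint {ι β : Type*} [Nonempty ι] {W : ι → Set α}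
    (hW : Pairwise (Disjoint on W)) (g : ι → α → β) : ∃ f : α → β, ∀ i, EqOn f (g i) (W i) := by
  have hindex (x : α) : ∃ i, ∀ j, x ∈ W j → i = j := by
    by_cases hx : ∃ i, x ∈ W i
    · exact hx.imp fun i hi j hj ↦ hW.eq (not_disjoint_iff.2 ⟨x, hi, hj⟩)
    · exact ⟨Classical.arbitrary ι, fun j hj ↦ (hx ⟨j, hj⟩).elim⟩
  choose i hi using hindex
  exact ⟨fun x ↦ g (i x) x, fun j x hx ↦ congrArg (g · x) (hi x j hx)⟩

variable [TopologicalSpace α]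

lemma exists_disjoint_isClopen_refinement [SecondCountableTopology α] {ι : Type*} [Nonempty ι]
    {V : ι → Set α} (hV : ∀ i, IsClopen (V i)) :
    ∃ (W : ℕ → Set α) (i : ℕ → ι), (∀ n, IsClopen (W n)) ∧ Pairwise (Disjoint on W) ∧
      ⋃ n, W n = ⋃ i, V i ∧ ∀ n, W n ⊆ V (i n) := by
  obtain ⟨T, hT, hTV⟩ := isOpen_iUnion_countable V fun i ↦ (hV i).isOpen
  obtain ⟨i, hi⟩ := countable_iff_exists_subset_range.1 hT
  refine ⟨disjointed fun n ↦ V (i n), i, fun n ↦ ?_, disjoint_disjointed _, ?_, disjointed_subset _⟩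
  · exact disjointedRec (fun _ j h ↦ h.diff (hV (i j))) (hV (i n))
  · rw [iUnion_disjointed]
    refine subset_antisymm (iUnion_mono' fun n ↦ ⟨i n, Subset.rfl⟩) (hTV ▸ ?_)
    refine iUnion₂_subset fun j hj ↦ ?_
    obtain ⟨n, rfl⟩ := hi hj
    exact subset_iUnion (fun n ↦ V (i n)) n

/-- A continuous map with values in `T`, defined on a `Gδ` set containing `X` and reducing `X` to
itself. The last condition allows a rank on `T` to be pulled back to the whole space, with a
constant rank given to the points outside `dom`. -/
structure PartialReduction (X T : Set α) where
  dom : Set α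
  toFun : α → α
  isGδ_dom : IsGδ dom
  subset_dom : X ⊆ dom
  continuousOn : ContinuousOn toFun dom
  mapsTo : MapsTo toFun dom T
  mem_iff : ∀ x ∈ dom, toFun x ∈ X ↔ x ∈ X
  isSigmaCompact_preimage : ∀ K ⊆ X, IsSigmaCompact K → IsSigmaCompact (dom ∩ toFun ⁻¹' K)

instance (X T : Set α) : CoeFun (PartialReduction X T) fun _ ↦ α → α :=
  ⟨PartialReduction.toFun⟩

theorem exists_partialReduction_of_homeomorph [IsCompletelyMetrizableSpace α] {X : Set α}
    (hne : X.Nonempty) (h : X ≃ₜ X) :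
    ∃ ρ : PartialReduction X (closure X), ∀ x : X, ρ x = h x := by
  obtain ⟨G, g, k, hG, hXG, hg, hGX, hgh, hkh, hkg⟩ := exists_isGδ_homeomorph_extension h hne
  have hback {x : α} (hx : x ∈ G) (hgx : g x ∈ X) : h.symm ⟨g x, hgx⟩ = x := by
    rw [← hkh, hkg hx]
  refine ⟨⟨G, g, hG, hXG, hg, hGX, fun x hx ↦ ⟨fun hgx ↦ ?_, fun hxX ↦ ?_⟩, fun K hKX hK ↦ ?_⟩, hgh⟩
  · exact hback hx hgx ▸ (h.symm _).2
  · exact hgh ⟨x, hxX⟩ ▸ (h _).2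
  · have himage : G ∩ g ⁻¹' K = (fun y ↦ (h.symm y : α)) '' ((↑) ⁻¹' K : Set X) := by
      ext x
      constructor
      · rintro ⟨hx, hxK⟩
        exact ⟨⟨g x, hKX hxK⟩, hxK, hback hx (hKX hxK)⟩
      · rintro ⟨y, hyK, rfl⟩
        refine ⟨hXG (h.symm y).2, ?_⟩
        rwa [mem_preimage, hgh, h.apply_symm_apply]
    rw [himage]
    refine IsSigmaCompact.image (continuous_subtype_val.comp h.symm.continuous) ?_
    rwa [Subtype.isSigmaCompact_iff, Subtype.image_preimage_coe, inter_eq_right.2 hKX]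

lemma continuousOn_iUnion_of_pairwise_disjoint {ι β : Type*} [TopologicalSpace β]
    {D W : ι → Set α} (hW : ∀ i, IsOpen (W i)) (hdisj : Pairwise (Disjoint on W))
    (hDW : ∀ i, D i ⊆ W i) {f : α → β} (hf : ∀ i, ContinuousOn f (D i)) :
    ContinuousOn f (⋃ i, D i) := by
  refine continuousOn_of_locally_continuousOn fun x hx ↦ ?_
  obtain ⟨i, hi⟩ := mem_iUnion.1 hx
  refine ⟨W i, hW i, hDW i hi, (hf i).mono ?_⟩
  rintro y ⟨hy, hyi⟩
  obtain ⟨j, hj⟩ := mem_iUnion.1 hy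
  exact hdisj.eq (not_disjoint_iff.2 ⟨y, hDW j hj, hyi⟩) ▸ hj

theorem nonempty_partialReduction_of_cover {X S U : Set α} {W : ℕ → Set α}
    (hW : ∀ n, IsClopen (W n)) (hdisj : Pairwise (Disjoint on W)) (hXW : X ⊆ ⋃ n, W n)
    (hU : IsClopen U) (ρ : ℕ → PartialReduction X S) (hρ : ∀ n, ∀ x ∈ X ∩ W n, ρ n x ∈ U) :
    Nonempty (PartialReduction X (U ∩ S)) := by
  obtain ⟨g, hg⟩ := exists_eqOn_of_pairwise_disjoint hdisj fun n ↦ ρ n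
  let D (n : ℕ) : Set α := (ρ n).dom ∩ ρ n ⁻¹' U ∩ W n
  have hDW (n : ℕ) : D n ⊆ W n := inter_subset_right
  have hD (n : ℕ) : IsGδ (D n) :=
    (isGδ_inter_preimage (ρ n).isGδ_dom (ρ n).continuousOn hU.isOpen.isGδ).inter (hW n).isOpen.isGδ
  have hgD (n : ℕ) : ContinuousOn g (D n) :=
    ((ρ n).continuousOn.mono fun x hx ↦ hx.1.1).congr ((hg n).mono (hDW n))
  refine ⟨⟨⋃ n, D n, g, isGδ_iUnion_of_pairwise_disjoint hW hdisj hD hDW, fun x hx ↦ ?_,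
    continuousOn_iUnion_of_pairwise_disjoint (fun n ↦ (hW n).isOpen) hdisj hDW hgD,
    mapsTo_iUnion.2 fun n x hx ↦ ?_, ?_, fun K hKX hK ↦ ?_⟩⟩
  · obtain ⟨n, hn⟩ := mem_iUnion.1 (hXW hx)
    exact mem_iUnion_of_mem n ⟨⟨(ρ n).subset_dom hx, hρ n x ⟨hx, hn⟩⟩, hn⟩
  · rw [hg n hx.2]
    exact ⟨hx.1.2, (ρ n).mapsTo hx.1.1⟩
  · simp only [mem_iUnion]
    rintro x ⟨n, ⟨hx, -⟩, hn⟩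
    rw [hg n hn, (ρ n).mem_iff x hx]
  · have hpre : (⋃ n, D n) ∩ g ⁻¹' K = ⋃ n, (ρ n).dom ∩ ρ n ⁻¹' (K ∩ U) ∩ W n := by
      rw [iUnion_inter]
      refine iUnion_congr fun n ↦ ?_
      rw [(hg n |>.mono (hDW n)).inter_preimage_eq]
      ext x
      simp only [D, mem_inter_iff, mem_preimage]
      tauto
    rw [hpre]
    exact isSigmaCompact_iUnion _ fun n ↦ isSigmaCompact_inter_of_isClosed
      ((ρ n).isSigmaCompact_preimage _ (inter_subset_left.trans hKX)
        (isSigmaCompact_inter_of_isClosed hK hU.isClosed)) (hW n).isClosed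

lemma exists_isClopen_subset_of_mem_nhds [CompactSpace α] [T2Space α]
    [TotallyDisconnectedSpace α] {x : α} {O : Set α} (hO : O ∈ 𝓝 x) :
    ∃ V, IsClopen V ∧ x ∈ V ∧ V ⊆ O := by
  obtain ⟨V, ⟨hxV, hV⟩, hVO⟩ := (nhds_basis_clopen x).mem_iff.1 hO
  exact ⟨V, hV, hxV, hVO⟩

theorem nonempty_partialReduction_of_isHomogeneous [CompactSpace α] [MetrizableSpace α]
    [TotallyDisconnectedSpace α] {X U : Set α} (hX : IsHomogeneous X) (hU : IsClopen U)
    (hne : (X ∩ U).Nonempty) :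
    Nonempty (PartialReduction X (U ∩ closure X)) := by
  have : IsCompletelyMetrizableSpace α := by
    let _ := metrizableSpaceMetric α
    infer_instance
  obtain ⟨u, huX, huU⟩ := hne
  have : Nonempty X := ⟨⟨u, huX⟩⟩
  have hlocal (x : X) : ∃ (ρ : PartialReduction X (closure X)) (V : Set α),
      IsClopen V ∧ ↑x ∈ V ∧ ∀ y ∈ X ∩ V, ρ y ∈ U := by
    obtain ⟨h, hx⟩ := hX x ⟨u, huX⟩
    obtain ⟨ρ, hρ⟩ := exists_partialReduction_of_homeomorph ⟨u, huX⟩ h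
    have hxU : ρ x ∈ U := by rwa [hρ, hx]
    have hnear : ∀ᶠ y in 𝓝 (x : α), y ∈ X → ρ y ∈ U := eventually_nhdsWithin_iff.1 <|
      (ρ.continuousOn.mono ρ.subset_dom x x.2).eventually (hU.isOpen.mem_nhds hxU)
    obtain ⟨V, hV, hxV, hVU⟩ := exists_isClopen_subset_of_mem_nhds hnear
    exact ⟨ρ, V, hV, hxV, fun y hy ↦ hVU hy.2 hy.1⟩
  choose ρ V hV hxV hVU using hlocal
  obtain ⟨W, i, hW, hdisj, hWV, hWi⟩ := exists_disjoint_isClopen_refinement hV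
  refine nonempty_partialReduction_of_cover hW hdisj ?_ hU (fun n ↦ ρ (i n))
    fun n x hx ↦ hVU (i n) x ⟨hx.1, hWi n hx.2⟩
  exact hWV ▸ fun x hx ↦ mem_iUnion_of_mem ⟨x, hx⟩ (hxV ⟨x, hx⟩)

end PartialReductions

section LocalCompactness

lemma weaklyLocallyCompactSpace_of_isHomogeneous {Y : Type*} [TopologicalSpace Y]
    (hY : IsHomogeneous Y) {y : Y} {K : Set Y} (hK : IsCompact K) (hKy : K ∈ 𝓝 y) :
    WeaklyLocallyCompactSpace Y := by
  refine ⟨fun x ↦ ?_⟩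
  obtain ⟨h, rfl⟩ := hY x y
  exact ⟨h ⁻¹' K, h.isCompact_preimage.2 hK, h.continuous.continuousAt.preimage_mem_nhds hKy⟩

theorem locallyCompactSpace_of_isHomogeneous {α : Type*} [TopologicalSpace α] [CompactSpace α]
    [T2Space α] {X U : Set α} (hX : IsHomogeneous X) (hU : IsOpen U) (hne : (X ∩ U).Nonempty)
    (hUX : U ∩ closure X ⊆ X) : LocallyCompactSpace X := by
  obtain ⟨u, huX, huU⟩ := hne
  obtain ⟨C, ⟨hCu, hC⟩, hCU⟩ := (closed_nhds_basis u).mem_iff.1 (hU.mem_nhds huU)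
  have hcompact : IsCompact ((↑) ⁻¹' C : Set X) := by
    have : X ∩ C = C ∩ closure X := subset_antisymm
      (fun x hx ↦ ⟨hx.2, subset_closure hx.1⟩) fun x hx ↦ ⟨hUX ⟨hCU hx.1, hx.2⟩, hx.1⟩
    rw [Subtype.isCompact_iff, Subtype.image_preimage_coe, this]
    exact (hC.inter isClosed_closure).isCompact
  have := weaklyLocallyCompactSpace_of_isHomogeneous hX (y := ⟨u, huX⟩) hcompact
    (continuous_subtype_val.continuousAt.preimage_mem_nhds hCu)
  infer_instance

end LocalCompactness

section DifferenceRank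

variable {α : Type*} [TopologicalSpace α]

/-- On `S`, the set `X` belongs to the `n`-th level of the difference hierarchy over `Fσ`: it is
the set of points whose rank `r x < n` is even (for `b = true`) or odd (for `b = false`), where each
set `{x | r x < i}` is `Fσ` in the whole space. -/
def HasRankLT (X : Set α) (n : ℕ) (b : Bool) (S : Set α) : Prop :=
  ∃ r : α → ℕ, (∀ i, IsGδ {x | i ≤ r x}) ∧ ∀ x ∈ S, r x < n ∧ (x ∈ X ↔ (Even (r x) ↔ b = true))

variable {X S : Set α} {n : ℕ} {b : Bool}

theorem HasRankLT.preimage_compl (h : HasRankLT X n b univ) {f : α → α} (hf : Continuous f)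
    (hfX : ∀ x, f x ∈ X ↔ x ∉ X) : HasRankLT X n (!b) univ := by
  obtain ⟨r, hr, hrX⟩ := h
  have hrf (i : ℕ) : IsGδ (f ⁻¹' {x | i ≤ r x}) := (hr i).preimage hf
  refine ⟨fun x ↦ r (f x), hrf, fun x _ ↦ ⟨(hrX (f x) trivial).1, ?_⟩⟩
  have := (hrX (f x) trivial).2
  rw [hfX] at this
  cases b <;> grind

theorem HasRankLT.pullback [CompactSpace α] [T2Space α] (h : HasRankLT X n b S) (hS : IsClosed S)
    (hb : b.toNat < n) (ρ : PartialReduction X S) : HasRankLT X n b univ := by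
  classical
  obtain ⟨r, hr, hrX⟩ := h
  let r' (x : α) : ℕ := if x ∈ ρ.dom then r (ρ x) else b.toNat
  have hin {x : α} (hx : x ∈ ρ.dom) : r' x = r (ρ x) := if_pos hx
  have hout {x : α} (hx : x ∉ ρ.dom) : r' x = b.toNat := if_neg hx
  refine ⟨r', fun i ↦ ?_, fun x _ ↦ ?_⟩
  · rcases lt_or_ge b.toNat i with hi | hi
    · have : {x | i ≤ r' x} = ρ.dom ∩ ρ ⁻¹' {x | i ≤ r x} := by
        ext x
        by_cases hx : x ∈ ρ.dom <;> simp [hin, hout, hx, hi]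
      rw [this]
      exact isGδ_inter_preimage ρ.isGδ_dom ρ.continuousOn (hr i)
    rcases i.eq_zero_or_pos with rfl | hi0
    · simp
    obtain ⟨rfl, rfl⟩ : i = 1 ∧ b = true := by cases b <;> grind
    have hcompl : {x | 1 ≤ r' x} = (ρ.dom ∩ ρ ⁻¹' ({x | 1 ≤ r x}ᶜ ∩ S))ᶜ := by
      ext x
      by_cases hx : x ∈ ρ.dom
      · simp [hin hx, hx, ρ.mapsTo hx, Nat.one_le_iff_ne_zero]
      · simp [hout hx, hx]
    rw [hcompl]
    refine isGδ_compl_of_isSigmaCompact (ρ.isSigmaCompact_preimage _ (fun x hx ↦ ?_)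
      (isSigmaCompact_inter_of_isClosed (isSigmaCompact_compl_of_isGδ (hr 1)) hS))
    have hx0 : r x = 0 := by simpa using hx.1
    exact (hrX x hx.2).2.2 (by simp [hx0])
  · by_cases hx : x ∈ ρ.dom
    · rw [hin hx, ← ρ.mem_iff x hx]
      exact hrX _ (ρ.mapsTo hx)
    · rw [hout hx]
      refine ⟨hb, iff_of_false (fun hxX ↦ hx (ρ.subset_dom hxX)) ?_⟩
      cases b <;> simp

variable [CompactSpace α] [T2Space α] [TotallyDisconnectedSpace α]

theorem exists_hasRankLT_of_forall_hasRankLT_succ (hX : X.Nonempty)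
    (h : ∀ b, HasRankLT X (n + 1) b univ) :
    ∃ b U, IsClopen U ∧ (X ∩ U).Nonempty ∧ HasRankLT X n b (U ∩ closure X) := by
  choose r hr hrX using h
  have hcover : closure X ⊆ ⋃ b, {x | n ≤ r b x}ᶜ := by
    intro x _
    by_contra hx
    simp only [mem_iUnion, mem_compl_iff, mem_ofPred_eq, not_exists, not_not] at hx
    have heq (b : Bool) : r b x = n := by grind
    have := (hrX true x trivial).2
    have := (hrX false x trivial).2
    grind
  obtain ⟨b, O, hO, ⟨x, hxO, hxX⟩, hOr⟩ := exists_isOpen_inter_subset_of_iUnion_isSigmaCompact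
    isClosed_closure.isCompact hX.closure (fun b ↦ isSigmaCompact_compl_of_isGδ (hr b n)) hcover
  obtain ⟨y, hyO, hyX⟩ := mem_closure_iff.1 hxX O hO hxO
  obtain ⟨U, hU, hyU, hUO⟩ := exists_isClopen_subset_of_mem_nhds (hO.mem_nhds hyO)
  exact ⟨b, U, hU, ⟨y, hyX, hyU⟩, r b, hr b, fun z hz ↦
    ⟨not_le.1 (hOr ⟨hUO hz.1, hz.2⟩), (hrX b z trivial).2⟩⟩

end DifferenceRank

theorem not_hasRankLT_of_isHomogeneous {α : Type*} [TopologicalSpace α] [CompactSpace α]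
    [MetrizableSpace α] [TotallyDisconnectedSpace α] {X : Set α} (hX : IsHomogeneous X)
    (hlc : ¬ LocallyCompactSpace X) {f : α → α} (hf : Continuous f)
    (hfX : ∀ x, f x ∈ X ↔ x ∉ X) (n : ℕ) (b : Bool) {U : Set α} (hU : IsClopen U)
    (hne : (X ∩ U).Nonempty) : ¬ HasRankLT X n b (U ∩ closure X) := by
  intro h
  induction n generalizing b U with
  | zero =>
    obtain ⟨u, huX, huU⟩ := hne
    obtain ⟨r, -, hr⟩ := h
    exact Nat.not_lt_zero _ (hr u ⟨huU, subset_closure huX⟩).1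
  | succ n ih =>
    have hb : b.toNat < n + 1 := by
      by_contra hn
      obtain ⟨rfl, rfl⟩ : n = 0 ∧ b = true := by cases b <;> grind
      obtain ⟨r, -, hr⟩ := h
      refine hlc (locallyCompactSpace_of_isHomogeneous hX hU.isOpen hne fun x hx ↦ ?_)
      have hx0 : r x = 0 := Nat.lt_one_iff.1 (hr x hx).1
      exact (hr x hx).2.2 (by simp [hx0])
    obtain ⟨ρ⟩ := nonempty_partialReduction_of_isHomogeneous hX hU hne
    have htotal : HasRankLT X (n + 1) b univ := h.pullback (hU.isClosed.inter isClosed_closure) hb ρ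
    have hboth : ∀ b', HasRankLT X (n + 1) b' univ :=
      (Bool.forall_bool' b).2 ⟨htotal, htotal.preimage_compl hf hfX⟩
    obtain ⟨b', V, hV, hVne, hVX⟩ := exists_hasRankLT_of_forall_hasRankLT_succ hne.left hboth
    exact ih b' hV hVne hVX

section FiniteRankOff

variable {α : Type*} [TopologicalSpace α]

/-- `D` is the last set of a finite decreasing sequence of `Gδ` sets, starting with the whole space,
such that each difference of consecutive sets is contained in `X` or disjoint from `X`. So the trace
of `X` off `D` is at a finite level of the difference hierarchy. -/
inductive FiniteRankOff (X : Set α) : Set α → Prop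
  | univ : FiniteRankOff X univ
  | step {D D' : Set α} (b : Prop) (hD : FiniteRankOff X D) (hD' : IsGδ D') (hsub : D' ⊆ D)
      (hb : ∀ x ∈ D \ D', x ∈ X ↔ b) : FiniteRankOff X D'

variable {X D : Set α}

lemma FiniteRankOff.isGδ (h : FiniteRankOff X D) : IsGδ D := by
  cases h with
  | univ => exact IsGδ.univ
  | step _ _ hD' _ _ => exact hD'

theorem FiniteRankOff.inter_preimage (hD : FiniteRankOff X D) {E : Set α}
    (hE : FiniteRankOff X E) {t : α → α} (ht : ContinuousOn t E) {b : Prop}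
    (htX : ∀ x ∈ E, t x ∈ X ↔ (x ∈ X ↔ b)) : FiniteRankOff X (E ∩ t ⁻¹' D) := by
  induction hD with
  | univ => simpa using hE
  | step c _ hD' hsub hc ih =>
    refine .step (c ↔ b) ih (isGδ_inter_preimage hE.isGδ ht hD')
      (inter_subset_inter_right _ (preimage_mono hsub)) fun x hx ↦ ?_
    have := htX x hx.1.1
    have := hc (t x) ⟨hx.1.2, fun hD' ↦ hx.2 ⟨hx.1.1, hD'⟩⟩
    tauto

/-- A rank bounded by `n` and equal to `n` exactly on `D`, such that off `D` the points of `X` are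
those of even rank. -/
def HasRankOff (X D : Set α) (n : ℕ) : Prop :=
  ∃ r : α → ℕ, (∀ i, IsGδ {x | i ≤ r x}) ∧ (∀ x, r x ≤ n) ∧ D = {x | n ≤ r x} ∧
    ∀ x ∉ D, x ∈ X ↔ Even (r x)

lemma HasRankOff.succ {n : ℕ} (h : HasRankOff X D n) {D' : Set α} (hD' : IsGδ D') (hsub : D' ⊆ D)
    (hX : ∀ x ∈ D \ D', x ∈ X ↔ Even n) : HasRankOff X D' (n + 1) := by
  classical
  obtain ⟨r, hr, hrn, rfl, hrX⟩ := h
  let r' (x : α) : ℕ := if x ∈ D' then n + 1 else r x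
  have hin {x : α} (hx : x ∈ D') : r' x = n + 1 := if_pos hx
  have hout {x : α} (hx : x ∉ D') : r' x = r x := if_neg hx
  have hr'n (x : α) : r' x ≤ n + 1 := by
    by_cases hx : x ∈ D'
    · rw [hin hx]
    · exact hout hx ▸ (hrn x).trans n.le_succ
  have hD'r : D' = {x | n + 1 ≤ r' x} := by
    ext x
    by_cases hx : x ∈ D'
    · simp [hx, hin hx]
    · simp [hx, hout hx, hrn x]
  refine ⟨r', fun i ↦ ?_, hr'n, hD'r, fun x hx ↦ ?_⟩
  · rcases lt_trichotomy i (n + 1) with hi | rfl | hi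
    · convert hr i using 3 with x
      by_cases hx : x ∈ D'
      · simpa [hin hx, hi.le] using (Nat.lt_succ_iff.1 hi).trans (hsub hx)
      · rw [hout hx]
    · exact hD'r ▸ hD'
    · convert IsGδ.empty
      exact eq_empty_of_forall_notMem fun x hx ↦ hi.not_ge (le_trans hx (hr'n x))
  · rw [hout hx]
    by_cases hxD : n ≤ r x
    · rw [hX x ⟨hxD, hx⟩, (hrn x).antisymm hxD]
    · exact hrX x hxD

theorem FiniteRankOff.exists_hasRankOff (h : FiniteRankOff X D) : ∃ n, HasRankOff X D n := by
  induction h with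
  | univ =>
    refine ⟨0, fun _ ↦ 0, fun i ↦ ?_, by simp, by simp, by simp⟩
    by_cases hi : i ≤ 0 <;> simp [hi, IsGδ.univ, IsGδ.empty]
  | @step D D' b hD hD' hsub hb ih =>
    obtain ⟨n, hn⟩ := ih
    obtain ⟨m, hm, hmb⟩ : ∃ m, HasRankOff X D m ∧ (Even m ↔ b) := by
      by_cases hnb : Even n ↔ b
      · exact ⟨n, hn, hnb⟩
      · exact ⟨n + 1, hn.succ hD.isGδ Subset.rfl (by simp), by grind [Nat.even_add_one]⟩
    exact ⟨m + 1, hm.succ hD' hsub fun x hx ↦ (hb x hx).trans hmb.symm⟩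

theorem FiniteRankOff.inter_nonempty_of_isHomogeneous [CompactSpace α]
    [MetrizableSpace α] [TotallyDisconnectedSpace α] (hD : FiniteRankOff X D)
    (hX : IsHomogeneous X) (hlc : ¬ LocallyCompactSpace X) {f : α → α} (hf : Continuous f)
    (hfX : ∀ x, f x ∈ X ↔ x ∉ X) : (X ∩ D).Nonempty := by
  by_contra hempty
  have hXne : X.Nonempty := by
    rw [nonempty_iff_ne_empty]
    rintro rfl
    exact hlc inferInstance
  have h : FiniteRankOff X ∅ := hD.step False .empty (empty_subset D) fun x hx ↦
    iff_false_intro fun hxX ↦ hempty ⟨x, hxX, hx.1⟩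
  obtain ⟨n, r, hr, -, hn, hrX⟩ := h.exists_hasRankOff
  refine not_hasRankLT_of_isHomogeneous hX hlc hf hfX n true isClopen_univ (by simpa using hXne)
    ⟨r, hr, fun x _ ↦ ⟨not_le.1 (hn ▸ notMem_empty x : x ∉ {x | n ≤ r x}), ?_⟩⟩
  simpa using hrX x (notMem_empty x)

end FiniteRankOff

section Switches

variable {α : Type*} [TopologicalSpace α] {X : Set α}

lemma FiniteRankOff.inter {D E : Set α} (hD : FiniteRankOff X D) (hE : FiniteRankOff X E) :
    FiniteRankOff X (E ∩ D) :=
  hD.inter_preimage hE continuousOn_id (b := True) (by simp)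

/-- Two continuous maps on a common domain with values in `target`: `map false` preserves membership
in `X` and `map true` reverses it. These are the building blocks of the Martin–Monk composites; the
last condition bounds the complexity of the domains of finite composites. -/
structure Switch (X : Set α) where
  target : Set α
  dom : Set α
  map : Bool → α → α
  continuousOn_map : ∀ b, ContinuousOn (map b) dom
  mapsTo_target : ∀ b, MapsTo (map b) dom target
  mem_iff : ∀ b, ∀ x ∈ dom, map b x ∈ X ↔ (x ∈ X ↔ b = false)
  finiteRankOff_dom : FiniteRankOff X dom

theorem PartialReduction.exists_switch {T : Set α} (ρ : PartialReduction X T) {f : α → α}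
    (hf : Continuous f) (hfX : ∀ x, f x ∈ X ↔ x ∉ X) : ∃ s : Switch X, s.target = T := by
  let D : Set α := ρ.dom ∩ f ⁻¹' ρ.dom
  have hD : FiniteRankOff X D := by
    have hdom : FiniteRankOff X ρ.dom := .step False .univ ρ.isGδ_dom (subset_univ _)
      fun x hx ↦ iff_false_intro fun hxX ↦ hx.2 (ρ.subset_dom hxX)
    refine .step True hdom (ρ.isGδ_dom.inter (ρ.isGδ_dom.preimage hf)) inter_subset_left
      fun x hx ↦ iff_true_intro ?_
    by_contra hxX
    exact hx.2 ⟨hx.1, ρ.subset_dom ((hfX x).2 hxX)⟩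
  refine ⟨⟨T, D, fun b x ↦ ρ (bif b then f x else x), ?_, ?_, ?_, hD⟩, rfl⟩ <;>
    refine Bool.forall_bool.2 ⟨?_, ?_⟩
  · exact ρ.continuousOn.mono inter_subset_left
  · exact ρ.continuousOn.comp hf.continuousOn fun x hx ↦ hx.2
  · exact fun x hx ↦ ρ.mapsTo hx.1
  · exact fun x hx ↦ ρ.mapsTo hx.2
  · exact fun x hx ↦ by simpa using ρ.mem_iff x hx.1
  · exact fun x hx ↦ by simpa [hfX] using ρ.mem_iff (f x) hx.2

/-- For a history of switches, listed from the newest to the oldest, the points to which every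
composite of maps of these switches, in this order, can be applied. -/
def historyDom : List (Switch X) → Set α
  | [] => univ
  | s :: h => s.dom ∩ ⋂ b, s.map b ⁻¹' historyDom h

lemma finiteRankOff_historyDom (h : List (Switch X)) : FiniteRankOff X (historyDom h) := by
  induction h with
  | nil => exact .univ
  | cons s h ih =>
    have (b : Bool) : FiniteRankOff X (s.dom ∩ s.map b ⁻¹' historyDom h) :=
      ih.inter_preimage s.finiteRankOff_dom (s.continuousOn_map b) (s.mem_iff b)
    convert (this true).inter (this false) using 1
    ext x
    simp only [historyDom, mem_inter_iff, mem_iInter, Bool.forall_bool, mem_preimage]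
    tauto

/-- The composites of maps of the newest switches of a history, each together with the remaining
part of the history. -/
def historyWords : List (Switch X) → Set ((α → α) × List (Switch X))
  | [] => {(id, [])}
  | s :: h => insert (id, s :: h) (⋃ b, (fun w ↦ (w.1 ∘ s.map b, w.2)) '' historyWords h)

lemma id_mem_historyWords (h : List (Switch X)) : (id, h) ∈ historyWords h := by
  cases h <;> simp [historyWords]

lemma comp_map_mem_historyWords {h h' : List (Switch X)} {φ : α → α}
    (hφ : (φ, h') ∈ historyWords h) (s : Switch X) (b : Bool) :
    (φ ∘ s.map b, h') ∈ historyWords (s :: h) :=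
  mem_insert_of_mem _ (mem_iUnion_of_mem b ⟨_, hφ, rfl⟩)

lemma finite_historyWords (h : List (Switch X)) : (historyWords h).Finite := by
  induction h with
  | nil => exact finite_singleton _
  | cons s h ih => exact (finite_iUnion fun b ↦ ih.image _).insert _

lemma continuousOn_and_mapsTo_of_mem_historyWords {h : List (Switch X)}
    {w : (α → α) × List (Switch X)} (hw : w ∈ historyWords h) :
    ContinuousOn w.1 (historyDom h) ∧ MapsTo w.1 (historyDom h) (historyDom w.2) := by
  induction h generalizing w with
  | nil =>
    obtain rfl := mem_singleton_iff.1 hw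
    exact ⟨continuousOn_id, mapsTo_id _⟩
  | cons s h ih =>
    rcases hw with rfl | hw
    · exact ⟨continuousOn_id, mapsTo_id _⟩
    obtain ⟨b, v, hv, rfl⟩ := mem_iUnion.1 hw
    have hmap : MapsTo (s.map b) (historyDom (s :: h)) (historyDom h) :=
      fun q hq ↦ mem_iInter.1 hq.2 b
    exact ⟨(ih hv).1.comp ((s.continuousOn_map b).mono inter_subset_left) hmap,
      (ih hv).2.comp hmap⟩

lemma exists_mem_nhds_forall_closure_image_subset {ι β : Type*} [TopologicalSpace β]
    [RegularSpace β] {T : Set ι} (hT : T.Finite) {φ : ι → α → β} {D : Set α} {p : α}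
    (hφ : ∀ i ∈ T, ContinuousWithinAt (φ i) D p) {W : ι → Set β} (hW : ∀ i ∈ T, W i ∈ 𝓝 (φ i p)) :
    ∃ N ∈ 𝓝 p, ∀ i ∈ T, closure (φ i '' (N ∩ D)) ⊆ W i := by
  have hlocal : ∀ i ∈ T, ∃ N ∈ 𝓝 p, closure (φ i '' (N ∩ D)) ⊆ W i := by
    intro i hi
    obtain ⟨C, ⟨hCp, hC⟩, hCW⟩ := (closed_nhds_basis (φ i p)).mem_iff.1 (hW i hi)
    obtain ⟨N, hN, hNC⟩ := mem_nhdsWithin_iff_exists_mem_nhds_inter.1 (hφ i hi hCp)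
    exact ⟨N, hN, (closure_minimal (image_subset_iff.2 hNC) hC).trans hCW⟩
  choose! N hN hNW using hlocal
  exact ⟨⋂ i ∈ T, N i, (biInter_mem hT).2 hN, fun i hi ↦ (closure_mono <| image_mono <|
    inter_subset_inter_left _ (biInter_subset_of_mem hi)).trans (hNW i hi)⟩

theorem exists_switch_forall_closure_image_subset [CompactSpace α] [T2Space α]
    [TotallyDisconnectedSpace α]
    (hswitch : ∀ U, IsClopen U → (X ∩ U).Nonempty → ∃ s : Switch X, s.target ⊆ U)
    (h : List (Switch X)) {p : α} (hp : p ∈ X ∩ historyDom h)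
    {W : (α → α) × List (Switch X) → Set α} (hW : ∀ w ∈ historyWords h, W w ∈ 𝓝 (w.1 p)) :
    ∃ s : Switch X, ∀ w ∈ historyWords h, closure (w.1 '' (s.target ∩ historyDom h)) ⊆ W w := by
  obtain ⟨N, hN, hNW⟩ := exists_mem_nhds_forall_closure_image_subset (finite_historyWords h)
    (fun w hw ↦ (continuousOn_and_mapsTo_of_mem_historyWords hw).1 p hp.2) hW
  obtain ⟨U, hU, hpU, hUN⟩ := exists_isClopen_subset_of_mem_nhds hN
  obtain ⟨s, hs⟩ := hswitch U hU ⟨p, hp.1, hpU⟩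
  exact ⟨s, fun w hw ↦ (closure_mono <| image_mono <|
    inter_subset_inter_left _ (hs.trans hUN)).trans (hNW w hw)⟩

end Switches

section Schemes

lemma exists_antitone_isOpen_iInter_eq {α : Type*} [TopologicalSpace α] {G : Set α}
    (hG : IsGδ G) : ∃ O : ℕ → Set α, (∀ n, IsOpen (O n)) ∧ Antitone O ∧ ⋂ n, O n = G := by
  obtain ⟨O, hO, rfl⟩ := hG.eq_iInter_nat
  exact ⟨dissipate O, fun n ↦ (finite_Iic n).isOpen_biInter fun i _ ↦ hO i, antitone_dissipate,
    iInter_dissipate⟩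

/-- The list `[s (m - 1), …, s 0]` of the terms chosen before step `m`, newest first. -/
def history {σ : Type*} (s : ℕ → σ) : ℕ → List σ
  | 0 => []
  | m + 1 => s m :: history s m

lemma length_history {σ : Type*} (s : ℕ → σ) (m : ℕ) : (history s m).length = m := by
  induction m with
  | zero => rfl
  | succ m ih => simp [history, ih]

lemma exists_seq_eq_apply_history {σ : Type*} (F : List σ → σ) :
    ∃ s : ℕ → σ, ∀ m, s m = F (history s m) := by
  let H : ℕ → List σ := Nat.rec [] fun _ h ↦ F h :: h
  refine ⟨fun m ↦ F (H m), fun m ↦ congrArg F ?_⟩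
  induction m with
  | zero => rfl
  | succ m ih => exact congrArg₂ _ rfl ih

section Descend

variable {α : Type*} [TopologicalSpace α] {X : Set α} (s : ℕ → Switch X) (z : Cantor) {n m : ℕ}

/-- The composite `(s n).map (z n) ∘ ⋯ ∘ (s (m - 1)).map (z (m - 1))`, from level `m` of a sequence
of switches down to level `n`; the identity for `m ≤ n`. -/
def descend (s : ℕ → Switch X) (z : Cantor) (n : ℕ) : ℕ → α → α
  | 0 => id
  | m + 1 => if n ≤ m then descend s z n m ∘ (s m).map (z m) else id

lemma descend_self (n : ℕ) : descend s z n n = id := by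
  cases n <;> simp [descend]

lemma descend_succ_right (h : n ≤ m) :
    descend s z n (m + 1) = descend s z n m ∘ (s m).map (z m) :=
  if_pos h

lemma descend_comp_descend {k : ℕ} (hnm : n ≤ m) (hmk : m ≤ k) :
    descend s z n m ∘ descend s z m k = descend s z n k := by
  induction k, hmk using Nat.le_induction with
  | base => rw [descend_self, comp_id]
  | succ k hmk ih =>
    rw [descend_succ_right s z hmk, descend_succ_right s z (hnm.trans hmk), ← ih, comp_assoc]

lemma descend_eq_comp (h : n < m) :
    descend s z n m = (s n).map (z n) ∘ descend s z (n + 1) m := by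
  rw [← descend_comp_descend s z n.le_succ h, descend_succ_right s z le_rfl, descend_self, id_comp]

lemma descend_mem_historyWords (h : n ≤ m) :
    (descend s z n m, history s n) ∈ historyWords (history s m) := by
  induction m, h using Nat.le_induction with
  | base => exact descend_self s z n ▸ id_mem_historyWords _
  | succ m h ih => exact descend_succ_right s z h ▸ comp_map_mem_historyWords ih _ _

lemma mapsTo_descend_historyDom (h : n ≤ m) :
    MapsTo (descend s z n m) (historyDom (history s m)) (historyDom (history s n)) :=
  (continuousOn_and_mapsTo_of_mem_historyWords (descend_mem_historyWords s z h)).2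

lemma mapsTo_descend_target (h : n < m) :
    MapsTo (descend s z n m) (historyDom (history s m)) (s n).target := by
  rw [descend_eq_comp s z h]
  exact ((s n).mapsTo_target (z n)).comp fun x hx ↦ (mapsTo_descend_historyDom s z h hx).1

lemma descend_congr {z z' : Cantor} (h : ∀ j ≥ n, z j = z' j) (m : ℕ) :
    descend s z n m = descend s z' n m := by
  induction m with
  | zero => rfl
  | succ m ih =>
    by_cases hm : n ≤ m
    · rw [descend_succ_right s z hm, descend_succ_right s z' hm, ih, h m hm]
    · simp only [descend, if_neg hm]

lemma isLocallyConstant_descend (n m : ℕ) : IsLocallyConstant fun z ↦ descend s z n m := by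
  induction m with
  | zero => exact .const id
  | succ m ih =>
    by_cases hm : n ≤ m
    · simp only [descend, if_pos hm]
      exact ih.comp₂ ((IsLocallyConstant.of_discrete (s m).map).comp_continuous
        (continuous_apply m)) (· ∘ ·)
    · simpa only [descend, if_neg hm] using .const id

end Descend

/-- A sequence of switches for which the images of `point m` under all composites of maps down to
level `n` converge, as `m` grows, to points at which the whole history of level `n` is defined. -/
structure SwitchScheme {α : Type*} [MetricSpace α] (X : Set α) where
  switch : ℕ → Switch X
  point : ℕ → α
  nhd : ℕ → ℕ → Set α
  point_mem : ∀ m, point m ∈ historyDom (history switch m)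
  iInter_nhd_subset : ∀ n, ⋂ m ≥ n, nhd n m ⊆ historyDom (history switch n)
  closure_image_subset : ∀ z n m, n ≤ m →
    closure (descend switch z n m '' ((switch m).target ∩ historyDom (history switch m))) ⊆
      Metric.ball (descend switch z n m (point m)) (1 / (m + 1)) ∩ nhd n m

variable {α : Type*} [MetricSpace α] {X : Set α}

theorem nonempty_switchScheme [CompactSpace α] [TotallyDisconnectedSpace α]
    (hswitch : ∀ U, IsClopen U → (X ∩ U).Nonempty → ∃ s : Switch X, s.target ⊆ U)
    (hrank : ∀ D, FiniteRankOff X D → (X ∩ D).Nonempty) : Nonempty (SwitchScheme X) := by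
  choose O hO hanti hOG using fun h : List (Switch X) ↦
    exists_antitone_isOpen_iInter_eq (finiteRankOff_historyDom h).isGδ
  choose p hp using fun h : List (Switch X) ↦ hrank _ (finiteRankOff_historyDom h)
  let W (h : List (Switch X)) (w : (α → α) × List (Switch X)) : Set α :=
    Metric.ball (w.1 (p h)) (1 / (h.length + 1)) ∩ O w.2 h.length
  have hW (h : List (Switch X)) : ∀ w ∈ historyWords h, W h w ∈ 𝓝 (w.1 (p h)) := by
    intro w hw
    have hwp := (continuousOn_and_mapsTo_of_mem_historyWords hw).2 (hp h).2
    rw [← hOG] at hwp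
    exact inter_mem (Metric.ball_mem_nhds _ Nat.one_div_pos_of_nat)
      ((hO _ _).mem_nhds (mem_iInter.1 hwp _))
  choose F hF using fun h ↦ exists_switch_forall_closure_image_subset hswitch h (hp h) (hW h)
  obtain ⟨s, hs⟩ := exists_seq_eq_apply_history F
  refine ⟨⟨s, fun m ↦ p (history s m), fun n ↦ O (history s n), fun m ↦ (hp _).2, fun n ↦ ?_,
    fun z n m hnm ↦ ?_⟩⟩
  · rw [← hOG, subset_iInter_iff]
    exact fun m ↦ (biInter_subset_of_mem (le_max_left n m)).trans (hanti _ (le_max_right n m))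
  · simpa only [W, ← hs, length_history] using
      hF (history s m) _ (descend_mem_historyWords s z hnm)

namespace SwitchScheme

variable (S : SwitchScheme X) (z : Cantor) {n m : ℕ}

/-- The image of `S.point m` at level `n`, along the maps selected by `z`. -/
def approx (n m : ℕ) : α := descend S.switch z n m (S.point m)

lemma approx_mem_image {k : ℕ} (hnm : n ≤ m) (hmk : m < k) :
    S.approx z n k ∈
      descend S.switch z n m '' ((S.switch m).target ∩ historyDom (history S.switch m)) := by
  rw [approx, ← descend_comp_descend S.switch z hnm hmk.le]
  exact mem_image_of_mem _ ⟨mapsTo_descend_target S.switch z hmk (S.point_mem k),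
    mapsTo_descend_historyDom S.switch z hmk.le (S.point_mem k)⟩

lemma dist_approx_lt {k : ℕ} (hnm : n ≤ m) (hmk : m ≤ k) :
    dist (S.approx z n k) (S.approx z n m) < 1 / (m + 1) := by
  obtain rfl | hmk := hmk.eq_or_lt
  · simpa using Nat.one_div_pos_of_nat (α := ℝ)
  · exact (S.closure_image_subset z n m hnm (subset_closure (S.approx_mem_image z hnm hmk))).1

lemma cauchySeq_approx (n : ℕ) : CauchySeq (S.approx z n) := by
  refine Metric.cauchySeq_iff'.2 fun ε hε ↦ ?_
  obtain ⟨m, hm⟩ := exists_nat_one_div_lt hε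
  refine ⟨max n m, fun k hk ↦ (S.dist_approx_lt z (le_max_left n m) hk).trans ?_⟩
  exact (Nat.one_div_le_one_div (le_max_right n m)).trans_lt hm

variable [CompleteSpace α]

/-- The limit at level `n` of the approximations along `z`. -/
noncomputable def limit (n : ℕ) : α :=
  (cauchySeq_tendsto_of_complete (S.cauchySeq_approx z n)).choose

lemma tendsto_approx (n : ℕ) : Tendsto (S.approx z n) atTop (𝓝 (S.limit z n)) :=
  (cauchySeq_tendsto_of_complete (S.cauchySeq_approx z n)).choose_spec

lemma limit_mem (h : n ≤ m) :
    S.limit z n ∈ Metric.ball (S.approx z n m) (1 / (m + 1)) ∩ S.nhd n m :=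
  S.closure_image_subset z n m h <| mem_closure_of_tendsto (S.tendsto_approx z n) <|
    (eventually_gt_atTop m).mono fun _ hk ↦ S.approx_mem_image z h hk

lemma limit_mem_historyDom (n : ℕ) : S.limit z n ∈ historyDom (history S.switch n) :=
  S.iInter_nhd_subset n <| mem_iInter₂.2 fun _ hm ↦ (S.limit_mem z hm).2

lemma limit_congr {z z' : Cantor} (h : ∀ j ≥ n, z j = z' j) : S.limit z n = S.limit z' n := by
  refine tendsto_nhds_unique (S.tendsto_approx z n) ((S.tendsto_approx z' n).congr fun m ↦ ?_)
  rw [approx, approx, descend_congr S.switch h]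

lemma limit_eq_map_limit_succ (n : ℕ) :
    S.limit z n = (S.switch n).map (z n) (S.limit z (n + 1)) := by
  have hdom : historyDom (history S.switch (n + 1)) ⊆ (S.switch n).dom := inter_subset_left
  refine tendsto_nhds_unique_of_eventuallyEq (S.tendsto_approx z n) (Tendsto.comp
    ((S.switch n).continuousOn_map (z n) _ (hdom (S.limit_mem_historyDom z (n + 1))))
    (tendsto_nhdsWithin_iff.2 ⟨S.tendsto_approx z (n + 1), ?_⟩)) ?_ <;>
    filter_upwards [eventually_ge_atTop (n + 1)] with m hm
  · exact hdom (mapsTo_descend_historyDom S.switch z hm (S.point_mem m))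
  · exact congrFun (descend_eq_comp S.switch z hm) _

lemma limit_mem_iff (n : ℕ) : S.limit z n ∈ X ↔ (S.limit z (n + 1) ∈ X ↔ z n = false) := by
  rw [limit_eq_map_limit_succ]
  exact (S.switch n).mem_iff (z n) _ (S.limit_mem_historyDom z (n + 1)).1

lemma continuous_limit_zero : Continuous fun z ↦ S.limit z 0 := by
  have hunif : TendstoUniformly (fun m z ↦ S.approx z 0 m) (fun z ↦ S.limit z 0) atTop := by
    refine Metric.tendstoUniformly_iff.2 fun ε hε ↦ ?_
    obtain ⟨N, hN⟩ := exists_nat_one_div_lt hε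
    filter_upwards [eventually_ge_atTop N] with m hm z
    exact (S.limit_mem z m.zero_le).1.trans ((Nat.one_div_le_one_div hm).trans_lt hN)
  refine hunif.continuous (Frequently.of_forall fun m ↦ ?_)
  exact ((isLocallyConstant_descend S.switch 0 m).comp (· (S.point m))).continuous

end SwitchScheme

end Schemes

section MartinMonk

lemma flipAt_iff_not_of_forall_iff {P : Cantor → ℕ → Prop}
    (hP : ∀ z n, P z n ↔ (P z (n + 1) ↔ z n = false))
    (htail : ∀ z n, P (flipAt n z) (n + 1) ↔ P z (n + 1)) (z : Cantor) {k n : ℕ} (hkn : k ≤ n) :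
    P (flipAt n z) k ↔ ¬ P z k := by
  induction hkn using Nat.decreasingInduction with
  | self =>
    rw [hP, hP z n, htail, flipAt_apply_self]
    cases z n <;> simp
  | of_succ k hk ih =>
    rw [hP, hP z k, ih, flipAt_apply_of_ne hk.ne]
    tauto

theorem exists_continuous_flipAt_mem_iff {α : Type*} [MetricSpace α] [CompactSpace α]
    [TotallyDisconnectedSpace α] {X : Set α}
    (hswitch : ∀ U, IsClopen U → (X ∩ U).Nonempty → ∃ s : Switch X, s.target ⊆ U)
    (hrank : ∀ D, FiniteRankOff X D → (X ∩ D).Nonempty) :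
    ∃ φ : Cantor → α, Continuous φ ∧ ∀ z n, φ (flipAt n z) ∈ X ↔ φ z ∉ X := by
  obtain ⟨S⟩ := nonempty_switchScheme hswitch hrank
  refine ⟨fun z ↦ S.limit z 0, S.continuous_limit_zero, fun z n ↦
    flipAt_iff_not_of_forall_iff (P := fun z n ↦ S.limit z n ∈ X) (fun z n ↦ S.limit_mem_iff z n)
      (fun z n ↦ ?_) z n.zero_le⟩
  rw [S.limit_congr fun j hj ↦ flipAt_apply_of_ne (Nat.ne_of_gt hj) z]

theorem homogeneous_borel_nonselfdual_general {α : Type*} [TopologicalSpace α] [CompactSpace α]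
    [MetrizableSpace α] [TotallyDisconnectedSpace α] {X : Set α}
    (hX : ∀ φ : Cantor → α, Continuous φ → BaireMeasurableSet (φ ⁻¹' X)) (hhom : IsHomogeneous X)
    (hlc : ¬ LocallyCompactSpace X) : ¬ ∃ f : α → α, Continuous f ∧ Xᶜ = f ⁻¹' X := by
  rintro ⟨f, hf, hfX⟩
  have hcompl (x : α) : f x ∈ X ↔ x ∉ X := (Set.ext_iff.1 hfX x).symm
  let _ := metrizableSpaceMetric α
  have hswitch (U : Set α) (hU : IsClopen U) (hne : (X ∩ U).Nonempty) :
      ∃ s : Switch X, s.target ⊆ U := by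
    obtain ⟨ρ⟩ := nonempty_partialReduction_of_isHomogeneous hhom hU hne
    obtain ⟨s, hs⟩ := ρ.exists_switch hf hcompl
    exact ⟨s, hs ▸ inter_subset_left⟩
  obtain ⟨φ, hφ, hflip⟩ := exists_continuous_flipAt_mem_iff hswitch fun D hD ↦
    hD.inter_nonempty_of_isHomogeneous hhom hlc hf hcompl
  exact not_baireMeasurableSet_of_flipAt hflip (hX φ hφ)

end MartinMonk

end

/-- The Wadge class of a homogeneous non-locally-compact Borel subspace of Cantor
space is non-self-dual: the complement of X is not Wadge reducible to X. -/
theorem homogeneous_borel_nonselfdual (X : Set Cantor)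
    (hB : @MeasurableSet Cantor (borel Cantor) X)
    (hhom : IsHomogeneous X) (hnlc : ¬ LocallyCompactSpace X) :
    ¬ WadgeLe Xᶜ X := by
  borelize Cantor
  exact homogeneous_borel_nonselfdual_general
    (fun φ hφ ↦ (hφ.measurable hB).baireMeasurableSet) hhom hnlc
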